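/- arXiv:0906.3657 — 2 statements merged into one kernel-verified Lean document; each statement's English description precedes it below -/
import Mathlib

section
/- Let b>0, d∈ℕ and let (G_n)_{n≥0} be a (b,d)-expander, and let c∈(0,1). There are a constant q_1∈(0,1), depending only on d, and a constant q_2(c)∈(q_1,1) such that: (i) for every α∈(0,1), for all n large enough, q_1 < p_{n,α}(c) < q_2(c); and (ii) there exist strictly positive constants C_1 and C_2, depending only on b and d, such that for every n and every p ≥ q_2(c), μ_{n,p}(L_n^{(1)} ≥ c|V_n|) ≥ 1 − C_1·exp(−C_2·|V_n|/log|V_n|). -/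
open Filter

noncomputable section

/-- The spanning subgraph of `G` determined by the configuration `x : {0,1}^E`:
an edge of `G` is retained iff its coordinate equals `true`. -/
def percoGraph {V : Type*} (G : SimpleGraph V) (x : G.edgeSet → Bool) : SimpleGraph V :=
  SimpleGraph.fromEdgeSet {e : Sym2 V | ∃ h : e ∈ G.edgeSet, x ⟨e, h⟩ = true}

/-- The vertex set of the connected component of `v` in the configuration `x`. -/
def percoComp {V : Type*} (G : SimpleGraph V) (x : G.edgeSet → Bool) (v : V) : Set V :=
  {u | (percoGraph G x).Reachable v u}

/-- The number of vertices of the connected component of `v` in the configuration `x`. -/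
def compSize {V : Type*} (G : SimpleGraph V) (x : G.edgeSet → Bool) (v : V) : ℕ :=
  (percoComp G x v).ncard

/-- `L⁽¹⁾`: the number of vertices of the largest connected component of the configuration. -/
def largestComp {V : Type*} (G : SimpleGraph V) (x : G.edgeSet → Bool) : ℕ :=
  sSup (Set.range (compSize G x))

/-- The probability of a single configuration under the product Bernoulli(p) measure. -/
def configProb {E : Type*} (p : ℝ) (x : E → Bool) : ℝ :=
  ∏ᶠ e : E, if x e then p else 1 - p

/-- The product Bernoulli(p) probability of a set of configurations. -/
def probC {E : Type*} (p : ℝ) (A : Set (E → Bool)) : ℝ :=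
  ∑ᶠ x ∈ A, configProb p x

/-- Expectation under the product Bernoulli(p) measure. -/
def expC {E : Type*} (p : ℝ) (f : (E → Bool) → ℝ) : ℝ :=
  ∑ᶠ x : E → Bool, configProb p x * f x

/-- Variance under the product Bernoulli(p) measure. -/
def varC {E : Type*} (p : ℝ) (f : (E → Bool) → ℝ) : ℝ :=
  expC p (fun x => f x ^ 2) - (expC p f) ^ 2

open Classical in
/-- The configuration `x` with coordinate `e` set to `b`. -/
def setEdge {E : Type*} (x : E → Bool) (e : E) (b : Bool) : E → Bool :=
  fun e' => if e' = e then b else x e'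

/-- The operator `Δ_{e,p} f (x) = f(x) - ∫ f(x) dx(e)`. -/
def deltaE {E : Type*} (p : ℝ) (f : (E → Bool) → ℝ) (e : E) (x : E → Bool) : ℝ :=
  f x - (p * f (setEdge x e true) + (1 - p) * f (setEdge x e false))

/-- The norm `‖g‖_{1,p}`. -/
def norm1 {E : Type*} (p : ℝ) (g : (E → Bool) → ℝ) : ℝ :=
  expC p fun x => |g x|

/-- The squared norm `‖g‖_{2,p}²`. -/
def sqNorm2 {E : Type*} (p : ℝ) (g : (E → Bool) → ℝ) : ℝ :=
  expC p fun x => g x ^ 2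

/-- `|E(S, Sᶜ)|`: the number of edges of `G` with one endpoint in `S` and the other outside `S`
(counted via the ordered pair whose first coordinate lies in `S`). -/
def edgeBoundaryCard {V : Type*} (G : SimpleGraph V) (S : Set V) : ℕ :=
  {q : V × V | G.Adj q.1 q.2 ∧ q.1 ∈ S ∧ q.2 ∉ S}.ncard

/-- The maximal degree of `G` is at most `d`. -/
def DegreeLE {V : Type*} (G : SimpleGraph V) (d : ℕ) : Prop :=
  ∀ v, {u | G.Adj v u}.ncard ≤ d

/-- The Cheeger (edge-isoperimetric) constant of `G` is strictly greater than `b`. -/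
def CheegerGT {V : Type*} (G : SimpleGraph V) (b : ℝ) : Prop :=
  ∀ S : Set V, 0 < S.ncard → 2 * S.ncard ≤ Nat.card V →
    b * (S.ncard : ℝ) < (edgeBoundaryCard G S : ℝ)

/-- A `(b,d)`-expander: a sequence of finite graphs with `|V_n| → ∞`, maximal degree at most `d`
and Cheeger constant greater than `b`. -/
structure ExpanderSeq (b : ℝ) (d : ℕ) where
  V : ℕ → Type
  finV : ∀ n, Finite (V n)
  G : ∀ n, SimpleGraph (V n)
  card_tendsto : Tendsto (fun n => Nat.card (V n)) atTop atTop
  degree_le : ∀ n, DegreeLE (G n) d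
  cheeger_gt : ∀ n, CheegerGT (G n) b

/-!
Both thresholds come from first-moment bounds.

If `p` is small, the number of walks of length `k` from a vertex is at most `d ^ k`, so a vertex is
connected to at most `(1 - d p)⁻¹` vertices on average; a component of size `m` contributes `m ^ 2`
connected pairs, hence `m ^ 2 * P(L ≥ m) ≤ |V| / (1 - d p)`, which for `m = c |V|` tends to `0`.

If `p` is close to `1`, a Peierls argument applies: when all components are smaller than `c |V|`,
some union `A` of components satisfies `(1 - c) |V| / 2 ≤ |A| ≤ |V| / 2`, and all of its at least
`b |A|` boundary edges are closed. There are at most `2 ^ |V|` such sets and each is that isolated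
with probability at most `exp (-2 |V|)`, so the failure probability is at most `exp (-|V|)`, which
is stronger than the bound with `|V| / log |V|`.
-/

section Bernoulli

variable {E : Type*} {p : ℝ}

theorem configProb_nonneg (hp : p ∈ Set.Icc 0 1) (x : E → Bool) : 0 ≤ configProb p x := by
  refine finprod_nonneg fun e => ?_
  split_ifs
  exacts [hp.1, sub_nonneg.2 hp.2]

theorem probC_eq_sum_indicator [Fintype E] [DecidableEq E] (p : ℝ) (A : Set (E → Bool)) :
    probC p A = ∑ x, A.indicator (configProb p) x := by
  rw [probC, finsum_mem_def, finsum_eq_sum_of_fintype]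

theorem probC_forall_mem [Fintype E] (p : ℝ) (t : E → Finset Bool) :
    probC p {x | ∀ e, x e ∈ t e} = ∏ e, ∑ y ∈ t e, if y then p else 1 - p := by
  classical
  have hpi : {x | ∀ e, x e ∈ t e} = (Fintype.piFinset t : Set (E → Bool)) := by
    ext x
    simp
  rw [Finset.prod_univ_sum, hpi, probC, finsum_mem_coe_finset]
  exact Finset.sum_congr rfl fun x _ => finprod_eq_prod_of_fintype _

theorem probC_forall_mem_eq [Finite E] (p : ℝ) (F : Set E) (y : Bool) :
    probC p {x | ∀ e ∈ F, x e = y} = (if y then p else 1 - p) ^ F.ncard := by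
  classical
  have := Fintype.ofFinite E
  have hcyl : {x : E → Bool | ∀ e ∈ F, x e = y} =
      {x | ∀ e, x e ∈ if e ∈ F then {y} else (Finset.univ : Finset Bool)} := by
    ext x
    refine forall_congr' fun e => ?_
    by_cases he : e ∈ F <;> simp [he]
  have hweight : ∀ e, (∑ z ∈ if e ∈ F then {y} else (Finset.univ : Finset Bool),
      if z then p else 1 - p) = if e ∈ F then (if y then p else 1 - p) else 1 := by
    intro e
    by_cases he : e ∈ F <;> simp [he]
  rw [hcyl, probC_forall_mem, Finset.prod_congr rfl fun e _ => hweight e, Finset.prod_ite,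
    Finset.prod_const, Finset.prod_const_one, mul_one, Set.ncard_eq_toFinset_card',
    Set.filter_mem_univ_eq_toFinset]

theorem probC_univ [Finite E] (p : ℝ) : probC p (Set.univ : Set (E → Bool)) = 1 := by
  simpa using probC_forall_mem_eq p (∅ : Set E) true

theorem probC_compl [Finite E] (p : ℝ) (A : Set (E → Bool)) : probC p Aᶜ = 1 - probC p A := by
  classical
  have := Fintype.ofFinite E
  rw [← probC_univ (E := E) p, eq_sub_iff_add_eq]
  simp only [probC_eq_sum_indicator, ← Finset.sum_add_distrib, Set.indicator_univ]
  exact Finset.sum_congr rfl fun x _ => Set.indicator_compl_add_self_apply A _ x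

open scoped Classical in
theorem mul_probC_le_sum_probC [Finite E] {ι : Type*} (hp : p ∈ Set.Icc 0 1) (s : Finset ι)
    {A : Set (E → Bool)} {B : ι → Set (E → Bool)} {K : ℝ}
    (h : ∀ x ∈ A, K ≤ ({i ∈ s | x ∈ B i} : Finset ι).card) :
    K * probC p A ≤ ∑ i ∈ s, probC p (B i) := by
  have := Fintype.ofFinite E
  simp only [probC_eq_sum_indicator]
  rw [Finset.sum_comm, Finset.mul_sum]
  refine Finset.sum_le_sum fun x _ => ?_
  have hcount : ∑ i ∈ s, (B i).indicator (configProb p) x =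
      ({i ∈ s | x ∈ B i} : Finset ι).card * configProb p x := by
    simp only [Set.indicator_apply, ← Finset.sum_filter, Finset.sum_const, nsmul_eq_mul]
  have hx0 := configProb_nonneg hp x
  rw [hcount]
  by_cases hx : x ∈ A
  · rw [Set.indicator_of_mem hx]
    exact mul_le_mul_of_nonneg_right (h x hx) hx0
  · rw [Set.indicator_of_notMem hx, mul_zero]
    positivity

theorem probC_le_sum_probC [Finite E] {ι : Type*} (hp : p ∈ Set.Icc 0 1) (s : Finset ι)
    {A : Set (E → Bool)} {B : ι → Set (E → Bool)} (h : ∀ x ∈ A, ∃ i ∈ s, x ∈ B i) :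
    probC p A ≤ ∑ i ∈ s, probC p (B i) := by
  classical
  rw [← one_mul (probC p A)]
  refine mul_probC_le_sum_probC hp s fun x hx => ?_
  obtain ⟨i, hi, hxi⟩ := h x hx
  exact_mod_cast Finset.card_pos.2 ⟨i, Finset.mem_filter.2 ⟨hi, hxi⟩⟩

end Bernoulli

section Configuration

variable {V : Type*} {G : SimpleGraph V} {x : G.edgeSet → Bool}

theorem mem_edgeSet_percoGraph {e : Sym2 V} :
    e ∈ (percoGraph G x).edgeSet ↔ ∃ h : e ∈ G.edgeSet, x ⟨e, h⟩ = true := by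
  rw [percoGraph, SimpleGraph.edgeSet_fromEdgeSet]
  exact and_iff_left_of_imp fun ⟨h, _⟩ => G.not_isDiag_of_mem_edgeSet h

theorem percoGraph_le (G : SimpleGraph V) (x : G.edgeSet → Bool) : percoGraph G x ≤ G :=
  SimpleGraph.edgeSet_subset_edgeSet.1 fun _ he => (mem_edgeSet_percoGraph.1 he).1

theorem compSize_le_largestComp [Finite V] (G : SimpleGraph V) (x : G.edgeSet → Bool) (v : V) :
    compSize G x v ≤ largestComp G x :=
  le_csSup (Set.finite_range _).bddAbove ⟨v, rfl⟩

theorem exists_compSize_eq_largestComp [Finite V] [Nonempty V] (G : SimpleGraph V)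
    (x : G.edgeSet → Bool) : ∃ v, compSize G x v = largestComp G x :=
  Nat.sSup_mem (Set.range_nonempty (compSize G x)) (Set.finite_range _).bddAbove

end Configuration

section Subcritical

variable {V : Type*} {G : SimpleGraph V}

theorem DegreeLE.degree_le {d : ℕ} (hG : DegreeLE G d) (v : V) [Fintype (G.neighborSet v)] :
    G.degree v ≤ d := by
  rw [← G.card_neighborSet_eq_degree, ← Nat.card_eq_fintype_card]
  exact hG v

theorem sum_card_finsetWalkLength_le [Fintype V] [DecidableEq V] [DecidableRel G.Adj] {d : ℕ}
    (hG : ∀ v, G.degree v ≤ d) (k : ℕ) (u : V) :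
    ∑ v, (G.finsetWalkLength k u v).card ≤ d ^ k := by
  induction k generalizing u with
  | zero =>
    have hnil : ∀ v, (G.finsetWalkLength 0 u v).card = if u = v then 1 else 0 := by
      intro v
      by_cases h : u = v
      · subst h
        simp [SimpleGraph.finsetWalkLength]
      · simp [SimpleGraph.finsetWalkLength, h]
    simp [hnil]
  | succ k ih =>
    have hcons : ∀ v, (G.finsetWalkLength (k + 1) u v).card ≤
        ∑ w : G.neighborSet u, (G.finsetWalkLength k w v).card := by
      intro v
      rw [SimpleGraph.finsetWalkLength]
      exact Finset.card_biUnion_le.trans_eq (by simp only [Finset.card_map])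
    calc ∑ v, (G.finsetWalkLength (k + 1) u v).card
        ≤ ∑ v, ∑ w : G.neighborSet u, (G.finsetWalkLength k w v).card :=
          Finset.sum_le_sum fun v _ => hcons v
      _ = ∑ w : G.neighborSet u, ∑ v, (G.finsetWalkLength k w v).card := Finset.sum_comm
      _ ≤ ∑ _w : G.neighborSet u, d ^ k := Finset.sum_le_sum fun w _ => ih w
      _ = G.degree u * d ^ k := by
          rw [Finset.sum_const, Finset.card_univ, G.card_neighborSet_eq_degree, smul_eq_mul]
      _ ≤ d * d ^ k := Nat.mul_le_mul_right _ (hG u)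
      _ = d ^ (k + 1) := (pow_succ' d k).symm

theorem ncard_setOf_mem_edges {u v : V} {w : G.Walk u v} (hw : w.IsTrail) :
    {e : G.edgeSet | (e : Sym2 V) ∈ w.edges}.ncard = w.length := by
  classical
  have himage : Subtype.val '' {e : G.edgeSet | (e : Sym2 V) ∈ w.edges} =
      (w.edges.toFinset : Set (Sym2 V)) := by
    ext e
    simpa using w.edges_subset_edgeSet (e := e)
  rw [← Set.ncard_image_of_injective _ Subtype.val_injective, himage, Set.ncard_coe_finset,
    List.toFinset_card_of_nodup hw.edges_nodup, w.length_edges]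

theorem exists_isPath_of_reachable_percoGraph {x : G.edgeSet → Bool} {u v : V}
    (h : (percoGraph G x).Reachable u v) :
    ∃ w : G.Walk u v, w.IsPath ∧ ∀ e : G.edgeSet, (e : Sym2 V) ∈ w.edges → x e = true := by
  obtain ⟨w, hw⟩ := h.exists_isPath
  refine ⟨w.mapLe (percoGraph_le G x), hw.mapLe _, fun e he => ?_⟩
  rw [SimpleGraph.Walk.edges_mapLe_eq_edges] at he
  exact (mem_edgeSet_percoGraph.1 (w.edges_subset_edgeSet he)).2

variable {p : ℝ}

theorem probC_reachable_le [Fintype V] [DecidableEq V] [DecidableRel G.Adj]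
    (hp : p ∈ Set.Icc 0 1) (u v : V) :
    probC p {x : G.edgeSet → Bool | (percoGraph G x).Reachable u v} ≤
      ∑ w ∈ G.finsetWalkLengthLT (Fintype.card V) u v, p ^ w.length := by
  classical
  set paths := {w ∈ G.finsetWalkLengthLT (Fintype.card V) u v | w.IsPath}
  calc probC p {x : G.edgeSet → Bool | (percoGraph G x).Reachable u v}
      ≤ ∑ w ∈ paths, probC p
          {x | ∀ e ∈ {e : G.edgeSet | (e : Sym2 V) ∈ w.edges}, x e = true} := by
        refine probC_le_sum_probC hp _ fun x hx => ?_
        obtain ⟨w, hw, hopen⟩ := exists_isPath_of_reachable_percoGraph hx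
        exact ⟨w, Finset.mem_filter.2
          ⟨SimpleGraph.mem_finsetWalkLengthLT_iff.2 hw.length_lt, hw⟩, hopen⟩
    _ = ∑ w ∈ paths, p ^ w.length := by
        refine Finset.sum_congr rfl fun w hw => ?_
        rw [probC_forall_mem_eq, if_pos rfl,
          ncard_setOf_mem_edges (Finset.mem_filter.1 hw).2.isTrail]
    _ ≤ ∑ w ∈ G.finsetWalkLengthLT (Fintype.card V) u v, p ^ w.length :=
        Finset.sum_le_sum_of_subset_of_nonneg (Finset.filter_subset _ _)
          fun w _ _ => pow_nonneg hp.1 _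

theorem sum_probC_reachable_le [Fintype V] {d : ℕ} (hG : DegreeLE G d) (hp : p ∈ Set.Icc 0 1)
    (hdp : d * p < 1) (u : V) :
    ∑ v, probC p {x : G.edgeSet → Bool | (percoGraph G x).Reachable u v} ≤ (1 - d * p)⁻¹ := by
  classical
  have hwalks : ∀ k, ∑ v, ∑ w ∈ G.finsetWalkLength k u v, p ^ w.length ≤ (d * p) ^ k := by
    intro k
    have hlength : ∀ v, ∑ w ∈ G.finsetWalkLength k u v, p ^ w.length =
        (G.finsetWalkLength k u v).card * p ^ k := by
      intro v
      rw [← nsmul_eq_mul, ← Finset.sum_const]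
      exact Finset.sum_congr rfl fun w hw => by
        rw [SimpleGraph.mem_finsetWalkLength_iff.1 hw]
    simp only [hlength]
    rw [← Finset.sum_mul, mul_pow]
    refine mul_le_mul_of_nonneg_right ?_ (pow_nonneg hp.1 k)
    exact_mod_cast sum_card_finsetWalkLength_le (fun v => hG.degree_le v) k u
  calc ∑ v, probC p {x : G.edgeSet → Bool | (percoGraph G x).Reachable u v}
      ≤ ∑ v, ∑ w ∈ G.finsetWalkLengthLT (Fintype.card V) u v, p ^ w.length :=
        Finset.sum_le_sum fun v _ => probC_reachable_le hp u v
    _ = ∑ k ∈ Finset.range (Fintype.card V), ∑ v, ∑ w ∈ G.finsetWalkLength k u v, p ^ w.length := by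
        rw [Finset.sum_comm]
        exact Finset.sum_congr rfl fun v _ => Finset.sum_disjiUnion _ _ _
    _ ≤ ∑ k ∈ Finset.range (Fintype.card V), (d * p) ^ k := Finset.sum_le_sum fun k _ => hwalks k
    _ ≤ (1 - d * p)⁻¹ := by
        have hdp0 : 0 ≤ d * p := mul_nonneg (Nat.cast_nonneg d) hp.1
        simpa using geom_sum_Ico_le_of_lt_one (m := 0) (n := Fintype.card V) hdp0 hdp

open scoped Classical in
theorem largestComp_sq_le_card_reachable [Fintype V] (G : SimpleGraph V) (x : G.edgeSet → Bool) :
    largestComp G x ^ 2 ≤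
      ({q | (percoGraph G x).Reachable q.1 q.2} : Finset (V × V)).card := by
  cases isEmpty_or_nonempty V
  · simp [largestComp, Set.range_eq_empty]
  obtain ⟨v, hv⟩ := exists_compSize_eq_largestComp G x
  rw [← hv, compSize, sq, ← Set.ncard_prod, ← Set.ncard_coe_finset]
  refine Set.ncard_le_ncard fun q hq => ?_
  simpa using hq.1.symm.trans hq.2

theorem sq_mul_probC_le_largestComp_le [Finite V] {d : ℕ} (hG : DegreeLE G d)
    (hp : p ∈ Set.Icc 0 1) (hdp : d * p < 1) {m : ℝ} (hm : 0 ≤ m) :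
    m ^ 2 * probC p {x : G.edgeSet → Bool | m ≤ largestComp G x} ≤
      Nat.card V * (1 - d * p)⁻¹ := by
  classical
  have := Fintype.ofFinite V
  calc m ^ 2 * probC p {x : G.edgeSet → Bool | m ≤ largestComp G x}
      ≤ ∑ q : V × V, probC p {x : G.edgeSet → Bool | (percoGraph G x).Reachable q.1 q.2} := by
        refine mul_probC_le_sum_probC hp _ fun x hx => (pow_le_pow_left₀ hm hx 2).trans ?_
        simp only [Set.mem_ofPred_eq]
        exact_mod_cast largestComp_sq_le_card_reachable G x
    _ = ∑ u, ∑ v, probC p {x : G.edgeSet → Bool | (percoGraph G x).Reachable u v} :=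
        Fintype.sum_prod_type _
    _ ≤ ∑ _u : V, (1 - d * p)⁻¹ := Finset.sum_le_sum fun u _ => sum_probC_reachable_le hG hp hdp u
    _ = Nat.card V * (1 - d * p)⁻¹ := by
        rw [Finset.sum_const, Finset.card_univ, nsmul_eq_mul, Nat.card_eq_fintype_card]

theorem sq_mul_card_mul_probC_le_two [Finite V] {d : ℕ} (hG : DegreeLE G d)
    (hp : p ∈ Set.Icc 0 1) (hdp : d * p ≤ 1 / 2) {c : ℝ} (hc : 0 ≤ c) :
    c ^ 2 * Nat.card V * probC p {x : G.edgeSet → Bool | c * Nat.card V ≤ largestComp G x} ≤ 2 := by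
  rcases (Nat.card V).eq_zero_or_pos with hV | hV
  · simp [hV]
  have hV' : (0 : ℝ) < Nat.card V := Nat.cast_pos.2 hV
  have hmain := sq_mul_probC_le_largestComp_le hG hp (hdp.trans_lt one_half_lt_one)
    (mul_nonneg hc hV'.le)
  have hinv : (1 - d * p)⁻¹ ≤ 2 := inv_le_of_inv_le₀ two_pos (by linarith)
  rw [mul_pow, sq (Nat.card V : ℝ)] at hmain
  refine le_of_mul_le_mul_left ?_ hV'
  linarith [mul_le_mul_of_nonneg_left hinv hV'.le]

end Subcritical

section Supercritical

variable {V : Type*}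

/-- A set of vertices which is a union of connected components of `H`, expressed as being closed
under adjacency. -/
def IsComponentUnion (H : SimpleGraph V) (A : Set V) : Prop :=
  ∀ ⦃u v⦄, H.Adj u v → u ∈ A → v ∈ A

namespace IsComponentUnion

variable {H : SimpleGraph V} {A B : Set V}

theorem compl (hA : IsComponentUnion H A) : IsComponentUnion H Aᶜ :=
  fun _ _ huv hu hv => hu (hA huv.symm hv)

theorem union (hA : IsComponentUnion H A) (hB : IsComponentUnion H B) :
    IsComponentUnion H (A ∪ B) :=
  fun _ _ huv => Or.imp (hA huv) (hB huv)

end IsComponentUnion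

theorem isComponentUnion_setOf_reachable (H : SimpleGraph V) (v : V) :
    IsComponentUnion H {u | H.Reachable v u} :=
  fun _ _ huv hu => hu.trans huv.reachable

/- A largest `A` with `2 |A| ≤ |V|` works: adding the component `C` of an outside vertex makes
`(A ∪ C)ᶜ` a competitor, so `|V| - |A| - |C| ≤ |A|`. -/
theorem exists_isComponentUnion_ncard [Finite V] (H : SimpleGraph V) {m : ℕ}
    (hm : ∀ v, {u | H.Reachable v u}.ncard ≤ m) :
    ∃ A, IsComponentUnion H A ∧ 2 * A.ncard ≤ Nat.card V ∧ Nat.card V ≤ 2 * A.ncard + m := by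
  obtain ⟨A, ⟨hA, hAcard⟩, hmax⟩ := Set.exists_max_image
    {A | IsComponentUnion H A ∧ 2 * A.ncard ≤ Nat.card V} Set.ncard (Set.toFinite _)
    ⟨∅, fun _ _ _ h => h.elim, by simp⟩
  refine ⟨A, hA, hAcard, ?_⟩
  by_cases hAuniv : A = Set.univ
  · rw [hAuniv, Set.ncard_univ]
    omega
  obtain ⟨v, hv⟩ := (Set.ne_univ_iff_exists_notMem A).1 hAuniv
  set C := {u | H.Reachable v u}
  have hAC : IsComponentUnion H (A ∪ C) := hA.union (isComponentUnion_setOf_reachable H v)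
  have hlt : A.ncard < (A ∪ C).ncard := Set.ncard_lt_ncard
    ⟨Set.subset_union_left, fun h => hv (h (Or.inr (SimpleGraph.Reachable.refl v)))⟩
  have hbig : Nat.card V < 2 * (A ∪ C).ncard := by
    by_contra! h
    exact hlt.not_ge (hmax _ ⟨hAC, h⟩)
  have hcompl := Set.ncard_add_ncard_compl (A ∪ C)
  have hle : (A ∪ C)ᶜ.ncard ≤ A.ncard := hmax _ ⟨hAC.compl, by omega⟩
  have hunion := Set.ncard_union_le A C
  have hC : C.ncard ≤ m := hm v
  omega

/-- The edge boundary of `A`, the set `E(A, Aᶜ)` of the Cheeger constant, as a set of coordinates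
of the configuration space. -/
def edgeBoundary (G : SimpleGraph V) (A : Set V) : Set G.edgeSet :=
  {e | ∃ u ∈ A, ∃ v ∉ A, (e : Sym2 V) = s(u, v)}

theorem ncard_edgeBoundary (G : SimpleGraph V) (A : Set V) :
    (edgeBoundary G A).ncard = edgeBoundaryCard G A := by
  refine (Set.ncard_congr (fun q hq => (⟨s(q.1, q.2), hq.1⟩ : G.edgeSet)) ?_ ?_ ?_).symm
  · rintro ⟨u, v⟩ ⟨-, hu, hv⟩
    exact ⟨u, hu, v, hv, rfl⟩
  · rintro ⟨u, v⟩ ⟨u', v'⟩ ⟨_, hu, _⟩ ⟨_, _, hv'⟩ h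
    rcases Sym2.eq_iff.1 (congrArg Subtype.val h) with ⟨rfl, rfl⟩ | ⟨rfl, rfl⟩
    · rfl
    · exact absurd hu hv'
  · rintro ⟨e, he⟩ ⟨u, hu, v, hv, rfl⟩
    exact ⟨(u, v), ⟨he, hu, hv⟩, rfl⟩

variable {G : SimpleGraph V}

theorem IsComponentUnion.eq_false_of_mem_edgeBoundary {x : G.edgeSet → Bool} {A : Set V}
    (hA : IsComponentUnion (percoGraph G x) A) : ∀ e ∈ edgeBoundary G A, x e = false := by
  rintro ⟨e, he⟩ ⟨u, hu, v, hv, rfl⟩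
  by_contra hopen
  exact hv (hA (mem_edgeSet_percoGraph.2 ⟨he, by simpa using hopen⟩) hu)

variable {b p : ℝ}

theorem probC_edgeBoundary_eq_false_le [Finite V] (hG : CheegerGT G b) (hp : p ≤ 1) {t : ℝ}
    (ht : 0 ≤ t) (hpt : 1 - p ≤ Real.exp (-t)) {A : Set V} (hA : 0 < A.ncard)
    (hA' : 2 * A.ncard ≤ Nat.card V) :
    probC p {x | ∀ e ∈ edgeBoundary G A, x e = false} ≤ Real.exp (-(t * (b * A.ncard))) := by
  have hcheeger := hG A hA hA'
  rw [probC_forall_mem_eq, ncard_edgeBoundary]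
  calc (if false = true then p else 1 - p) ^ edgeBoundaryCard G A
      = (1 - p) ^ edgeBoundaryCard G A := by rw [if_neg Bool.false_ne_true]
    _ ≤ Real.exp (-t) ^ edgeBoundaryCard G A := pow_le_pow_left₀ (sub_nonneg.2 hp) hpt _
    _ = Real.exp (-(t * edgeBoundaryCard G A)) := by rw [← Real.exp_nat_mul]; congr 1; ring
    _ ≤ Real.exp (-(t * (b * A.ncard))) := by gcongr

theorem exists_edgeBoundary_eq_false_of_largestComp_lt [Finite V] {x : G.edgeSet → Bool} {c : ℝ}
    (hc : c < 1) (hx : largestComp G x < c * Nat.card V) :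
    ∃ A : Set V, 0 < A.ncard ∧ 2 * A.ncard ≤ Nat.card V ∧ (1 - c) * Nat.card V ≤ 2 * A.ncard ∧
      ∀ e ∈ edgeBoundary G A, x e = false := by
  obtain ⟨A, hA, hle, hge⟩ :=
    exists_isComponentUnion_ncard (percoGraph G x) (compSize_le_largestComp G x)
  have hge' : (Nat.card V : ℝ) ≤ 2 * A.ncard + largestComp G x := by exact_mod_cast hge
  refine ⟨A, Nat.pos_of_ne_zero fun hA0 => ?_, hle, by linarith, hA.eq_false_of_mem_edgeBoundary⟩
  rw [hA0, Nat.cast_zero] at hge'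
  nlinarith [(Nat.cast_nonneg (Nat.card V) : (0 : ℝ) ≤ _)]

theorem card_finset_set_le_exp [Finite V] (s : Finset (Set V)) :
    (s.card : ℝ) ≤ Real.exp (Nat.card V) := by
  have := Fintype.ofFinite V
  have hcard : s.card ≤ 2 ^ Nat.card V := by
    simpa [Nat.card_eq_fintype_card] using Finset.card_le_univ s
  calc (s.card : ℝ) ≤ 2 ^ Nat.card V := by exact_mod_cast hcard
    _ ≤ Real.exp 1 ^ Nat.card V := by gcongr; exact Real.exp_one_gt_two.le
    _ = Real.exp (Nat.card V) := Real.exp_one_pow _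

theorem probC_largestComp_lt_le [Finite V] (hG : CheegerGT G b) (hb : 0 < b)
    (hp : p ∈ Set.Icc 0 1) {c : ℝ} (hc : c < 1)
    (hpc : 1 - p ≤ Real.exp (-(4 / (b * (1 - c))))) :
    probC p {x : G.edgeSet → Bool | largestComp G x < c * Nat.card V} ≤
      Real.exp (-Nat.card V) := by
  classical
  have := Fintype.ofFinite V
  have hbc : 0 < b * (1 - c) := mul_pos hb (sub_pos.2 hc)
  set s : Finset (Set V) :=
    {A | 0 < A.ncard ∧ 2 * A.ncard ≤ Nat.card V ∧ (1 - c) * Nat.card V ≤ 2 * A.ncard}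
  have hterm : ∀ A ∈ s, probC p {x | ∀ e ∈ edgeBoundary G A, x e = false} ≤
      Real.exp (-(2 * Nat.card V)) := by
    intro A hA
    obtain ⟨hA0, hle, hge⟩ := (Finset.mem_filter.1 hA).2
    refine (probC_edgeBoundary_eq_false_le hG hp.2 (div_pos four_pos hbc).le hpc hA0 hle).trans ?_
    rw [Real.exp_le_exp, neg_le_neg_iff, div_mul_eq_mul_div, le_div_iff₀ hbc]
    linarith [mul_le_mul_of_nonneg_left hge hb.le]
  calc probC p {x : G.edgeSet → Bool | largestComp G x < c * Nat.card V}
      ≤ ∑ A ∈ s, probC p {x | ∀ e ∈ edgeBoundary G A, x e = false} := by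
        refine probC_le_sum_probC hp s fun x hx => ?_
        obtain ⟨A, hA0, hle, hge, hclosed⟩ :=
          exists_edgeBoundary_eq_false_of_largestComp_lt hc hx
        exact ⟨A, Finset.mem_filter.2 ⟨Finset.mem_univ A, hA0, hle, hge⟩, hclosed⟩
    _ ≤ s.card * Real.exp (-(2 * Nat.card V)) := by
        simpa using Finset.sum_le_card_nsmul s _ _ hterm
    _ ≤ Real.exp (Nat.card V) * Real.exp (-(2 * Nat.card V)) := by
        gcongr
        exact card_finset_set_le_exp s
    _ = Real.exp (-Nat.card V) := by rw [← Real.exp_add]; congr 1; ring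

theorem one_sub_exp_neg_card_le_probC [Finite V] (hG : CheegerGT G b) (hb : 0 < b)
    (hp : p ∈ Set.Icc 0 1) {c : ℝ} (hc : c < 1)
    (hpc : 1 - p ≤ Real.exp (-(4 / (b * (1 - c))))) :
    1 - Real.exp (-Nat.card V) ≤
      probC p {x : G.edgeSet → Bool | c * Nat.card V ≤ largestComp G x} := by
  have hlt := probC_largestComp_lt_le hG hb hp hc hpc
  have hcompl : {x : G.edgeSet → Bool | (largestComp G x : ℝ) < c * Nat.card V} =
      {x | c * Nat.card V ≤ largestComp G x}ᶜ := by
    ext x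
    simp
  rw [hcompl, probC_compl] at hlt
  linarith

end Supercritical

theorem log_two_mul_div_log_le (n : ℕ) : Real.log 2 * n / Real.log n ≤ n := by
  rcases lt_or_ge n 2 with hn | hn
  · -- Here `log n = 0`, so the quotient is `0` by convention.
    interval_cases n <;> simp
  · have hlog2 : 0 < Real.log 2 := Real.log_pos one_lt_two
    have hlog : Real.log 2 ≤ Real.log n := Real.log_le_log two_pos (by exact_mod_cast hn)
    rw [div_le_iff₀ (hlog2.trans_le hlog), mul_comm (n : ℝ)]
    gcongr

theorem stmt2_general (d : ℕ) :
    ∃ q1 ∈ Set.Ioo (0 : ℝ) 1, ∀ b : ℝ, 0 < b → ∀ c ∈ Set.Ioo (0 : ℝ) 1, ∃ q2 ∈ Set.Ioo q1 1,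
      (∀ α ∈ Set.Ioo (0 : ℝ) 1, ∃ N : ℕ, ∀ {V : Type*} [Finite V] (G : SimpleGraph V),
        N ≤ Nat.card V → DegreeLE G d → CheegerGT G b → ∀ p ∈ Set.Icc (0 : ℝ) 1,
          probC p {x : G.edgeSet → Bool | c * Nat.card V ≤ largestComp G x} = α →
          p ∈ Set.Ioo q1 q2) ∧
      (∀ {V : Type*} [Finite V] (G : SimpleGraph V), CheegerGT G b → ∀ p : ℝ, q2 ≤ p → p ≤ 1 →
        1 - Real.exp (-Nat.card V) ≤
          probC p {x : G.edgeSet → Bool | c * Nat.card V ≤ largestComp G x}) := by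
  refine ⟨1 / (2 * d + 2), ⟨by positivity, by rw [div_lt_one] <;> linarith⟩, fun b hb c hc => ?_⟩
  have hc1 : 0 < 1 - c := sub_pos.2 hc.2
  set ε := Real.exp (-(4 / (b * (1 - c))))
  have hε0 : 0 < ε := Real.exp_pos _
  have hε1 : ε < 1 := Real.exp_lt_one_iff.2 (neg_neg_of_pos (by positivity))
  have hq : 1 / (2 * (d : ℝ) + 2) ≤ 1 / 2 := one_div_le_one_div_of_le two_pos (by linarith)
  refine ⟨1 - ε / 2, ⟨by linarith, by linarith⟩, fun α hα => ?_, fun G hG p hqp hp1 =>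
    one_sub_exp_neg_card_le_probC hG hb ⟨by linarith, hp1⟩ hc.2 (by linarith)⟩
  have hsq : ∀ᶠ n : ℕ in atTop, 2 < c ^ 2 * α * n :=
    (tendsto_natCast_atTop_atTop.const_mul_atTop
      (mul_pos (pow_pos hc.1 2) hα.1)).eventually_gt_atTop 2
  have hexp : ∀ᶠ n : ℕ in atTop, Real.exp (-n) < 1 - α :=
    (Real.tendsto_exp_neg_atTop_nhds_zero.comp tendsto_natCast_atTop_atTop).eventually_lt_const
      (sub_pos.2 hα.2)
  obtain ⟨N, hN⟩ := eventually_atTop.1 (hsq.and hexp)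
  refine ⟨N, fun {V} _ G hV hdeg hG p hp hprob => ?_⟩
  obtain ⟨hlarge, hsmall⟩ := hN _ hV
  constructor
  · by_contra! hle
    have hdp : d * p ≤ 1 / 2 := by
      rw [le_div_iff₀ (by positivity)] at hle
      linarith [hp.1]
    have hbound := sq_mul_card_mul_probC_le_two hdeg hp hdp hc.1.le
    rw [hprob] at hbound
    linarith
  · by_contra! hge
    have hbound := one_sub_exp_neg_card_le_probC hG hb hp hc.2 (by linarith)
    rw [hprob] at hbound
    linarith

/-- the thresholds `p_{n,α}(c)` are bounded away from 0 and 1: there is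
`q₁ ∈ (0,1)` depending only on `d`, constants `C₁, C₂ > 0` depending only on `b` and `d`,
and `q₂(c) ∈ (q₁,1)` such that (i) for every `α ∈ (0,1)` and all `n` large enough any
`p ∈ [0,1]` with `μ_{n,p}(L_n ≥ c|V_n|) = α` lies in `(q₁, q₂)`; and (ii) for every `n`
and every `p ≥ q₂`, `μ_{n,p}(L_n ≥ c|V_n|) ≥ 1 - C₁ exp(-C₂ |V_n| / log |V_n|)`. -/
theorem stmt2 (d : ℕ) :
    ∃ q1 ∈ Set.Ioo (0 : ℝ) 1, ∀ b : ℝ, 0 < b →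
      ∃ C1 > (0 : ℝ), ∃ C2 > (0 : ℝ), ∀ c ∈ Set.Ioo (0 : ℝ) 1,
        ∃ q2 ∈ Set.Ioo q1 1,
          (∀ E : ExpanderSeq b d, ∀ α ∈ Set.Ioo (0 : ℝ) 1, ∃ N : ℕ, ∀ n ≥ N,
            ∀ p ∈ Set.Icc (0 : ℝ) 1,
              probC p {x : (E.G n).edgeSet → Bool |
                  c * (Nat.card (E.V n) : ℝ) ≤ (largestComp (E.G n) x : ℝ)} = α →
              p ∈ Set.Ioo q1 q2) ∧
          (∀ (E : ExpanderSeq b d) (n : ℕ), ∀ p : ℝ, q2 ≤ p → p ≤ 1 →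
            1 - C1 * Real.exp (-C2 * (Nat.card (E.V n) : ℝ) / Real.log (Nat.card (E.V n))) ≤
              probC p {x : (E.G n).edgeSet → Bool |
                c * (Nat.card (E.V n) : ℝ) ≤ (largestComp (E.G n) x : ℝ)}) := by
  obtain ⟨q1, hq1, hgeneral⟩ := stmt2_general d
  refine ⟨q1, hq1, fun b hb => ⟨1, one_pos, Real.log 2, Real.log_pos one_lt_two, fun c hc => ?_⟩⟩
  obtain ⟨q2, hq2, hthreshold, hgiant⟩ := hgeneral b hb c hc
  refine ⟨q2, hq2, fun E α hα => ?_, fun E n p hqp hp1 => ?_⟩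
  · obtain ⟨N, hN⟩ := hthreshold α hα
    obtain ⟨n₀, hn₀⟩ := eventually_atTop.1 (E.card_tendsto.eventually_ge_atTop N)
    have := E.finV
    exact ⟨n₀, fun n hn => hN (E.G n) (hn₀ n hn) (E.degree_le n) (E.cheeger_gt n)⟩
  · have := E.finV n
    refine le_trans ?_ (hgiant (E.G n) (E.cheeger_gt n) p hqp hp1)
    rw [one_mul, neg_mul, neg_div]
    gcongr
    exact log_two_mul_div_log_le _
end
end

section
/- Let b>0, d∈ℕ and let (G_n)_{n≥0} be a (b,d)-expander. There are constants p_0(b)<1, a(b)>0, and C(b,d)>0 such that for every p ≥ p_0 and every n sufficiently large: μ_{n,p}(L_n^{(1)} ≥ a·|V_n|) ≥ 1 − exp(−C·|V_n|/log|V_n|). -/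
open Filter

noncomputable section

/-! If every component of a configuration has fewer than `a |V|` vertices, with `a < 1/2`, then a
maximal union `A` of components with `2 |A| ≤ |V|` has more than `(1/2 - a) |V|` vertices, and all
the edges between `A` and its complement are closed. The expansion makes this an event of
probability at most `(1 - p) ^ (b (1/2 - a) |V|)`, which for `p` close to `1` beats the number
`2 ^ |V|` of candidates for `A`. -/

section ProductBernoulli

open MeasureTheory ProbabilityTheory unitInterval

variable {E : Type*}

theorem probC_eq_pi_real [Fintype E] (p : I) (A : Set (E → Bool)) :
    probC p A = (Measure.pi fun _ : E ↦ Ber(true, false, p)).real A := by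
  classical
  have hsingleton (x : E → Bool) :
      (Measure.pi fun _ : E ↦ Ber(true, false, p)).real {x} = configProb p x := by
    rw [configProb, finprod_eq_prod_of_fintype, measureReal_def, Measure.pi_singleton,
      ENNReal.toReal_prod]
    refine Finset.prod_congr rfl fun e _ ↦ ?_
    rw [← measureReal_def]
    cases x e <;> simp
  rw [probC, finsum_mem_eq_toFinset_sum]
  simp only [← hsingleton]
  rw [sum_measureReal_singleton, Set.coe_toFinset]

variable [Finite E]

theorem probC_forall_eq_false (p : I) (F : Set E) :
    probC p {x : E → Bool | ∀ e ∈ F, x e = false} = (1 - p : ℝ) ^ F.ncard := by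
  classical
  have := Fintype.ofFinite E
  have hbox : {x : E → Bool | ∀ e ∈ F, x e = false} =
      Set.univ.pi fun e ↦ if e ∈ F then {false} else Set.univ := by
    ext x
    simp only [Set.mem_ofPred_eq, Set.mem_univ_pi]
    refine forall_congr' fun e ↦ ?_
    split_ifs with he <;> simp [he]
  have hfactor (e : E) : Ber(true, false, p).real (if e ∈ F then {false} else Set.univ) =
      if e ∈ F then (1 - p : ℝ) else 1 := by
    split_ifs <;> simp
  rw [probC_eq_pi_real, hbox, measureReal_def, Measure.pi_pi, ENNReal.toReal_prod]
  simp only [← measureReal_def, hfactor]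
  rw [Finset.prod_ite, Finset.prod_const, Finset.prod_const_one, mul_one,
    Set.ncard_eq_toFinset_card', Set.filter_mem_univ_eq_toFinset]

theorem one_sub_card_mul_le_probC {ι : Type*} {p : ℝ} (hp : p ∈ I) {A : Set (E → Bool)}
    (T : Finset ι) (F : ι → Set E) {c : ℝ} (hc : ∀ i ∈ T, (1 - p) ^ (F i).ncard ≤ c)
    (hA : ∀ x ∉ A, ∃ i ∈ T, ∀ e ∈ F i, x e = false) :
    1 - T.card * c ≤ probC p A := by
  lift p to I using hp
  have := Fintype.ofFinite E
  set μ := Measure.pi fun _ : E ↦ Ber(true, false, p)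
  have hunion : Aᶜ ⊆ ⋃ i ∈ T, {x | ∀ e ∈ F i, x e = false} := fun x hx ↦ by
    simpa using hA x hx
  have hcompl : μ.real Aᶜ ≤ T.card * c := calc
    μ.real Aᶜ ≤ ∑ i ∈ T, μ.real {x | ∀ e ∈ F i, x e = false} :=
      (measureReal_mono hunion (measure_ne_top μ _)).trans (measureReal_biUnion_finset_le _ _)
    _ ≤ T.card * c := by
      rw [← nsmul_eq_mul]
      refine Finset.sum_le_card_nsmul _ _ _ fun i hi ↦ ?_
      rw [← probC_eq_pi_real, probC_forall_eq_false]
      exact hc i hi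
  rw [probC_eq_pi_real]
  linarith [probReal_add_probReal_compl (μ := μ) A.toFinite.measurableSet]

end ProductBernoulli

section Cuts

variable {V : Type*}

/-- The edges of `G` joining `A` to its complement, as a set of coordinates of a configuration. -/
def cutEdges (G : SimpleGraph V) (A : Set V) : Set G.edgeSet :=
  {e | ∃ u ∈ A, ∃ v ∉ A, e.1 = s(u, v)}

theorem ncard_cutEdges (G : SimpleGraph V) (A : Set V) :
    (cutEdges G A).ncard = edgeBoundaryCard G A := by
  have himage : Subtype.val '' cutEdges G A =
      (fun q : V × V ↦ s(q.1, q.2)) '' {q | G.Adj q.1 q.2 ∧ q.1 ∈ A ∧ q.2 ∉ A} := by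
    ext e
    constructor
    · rintro ⟨⟨_, he⟩, ⟨u, hu, v, hv, rfl⟩, rfl⟩
      exact ⟨(u, v), ⟨he, hu, hv⟩, rfl⟩
    · rintro ⟨⟨u, v⟩, ⟨he, hu, hv⟩, rfl⟩
      exact ⟨⟨s(u, v), he⟩, ⟨u, hu, v, hv, rfl⟩, rfl⟩
  rw [← Set.ncard_image_of_injective _ Subtype.val_injective, himage, edgeBoundaryCard]
  refine Set.InjOn.ncard_image ?_
  rintro ⟨u, v⟩ ⟨-, hu, -⟩ ⟨u', v'⟩ ⟨-, -, hv'⟩ h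
  rcases Sym2.eq_iff.1 h with ⟨rfl, rfl⟩ | ⟨rfl, rfl⟩
  · rfl
  · exact absurd hu hv'

theorem CheegerGT.pow_ncard_cutEdges_le {G : SimpleGraph V} {b q κ : ℝ} (hG : CheegerGT G b)
    (hq : 0 ≤ q) (hκ : 0 ≤ κ) (hqκ : q ≤ Real.exp (-κ)) {A : Set V} (hA : 0 < A.ncard)
    (hA' : 2 * A.ncard ≤ Nat.card V) :
    q ^ (cutEdges G A).ncard ≤ Real.exp (-(κ * (b * A.ncard))) := by
  calc q ^ (cutEdges G A).ncard ≤ Real.exp (-κ) ^ (cutEdges G A).ncard := by gcongr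
    _ = Real.exp (-(κ * edgeBoundaryCard G A)) := by
      rw [ncard_cutEdges, ← Real.exp_nat_mul]
      congr 1
      ring
    _ ≤ Real.exp (-(κ * (b * A.ncard))) := by
      gcongr
      exact (hG A hA hA').le

variable [Finite V]

theorem exists_adj_closed_lt_two_mul_ncard_add (H : SimpleGraph V) {k : ℕ}
    (hk : ∀ v, {u | H.Reachable v u}.ncard ≤ k) [Nonempty V] :
    ∃ A : Set V, (∀ u v, H.Adj u v → u ∈ A → v ∈ A) ∧ 2 * A.ncard ≤ Nat.card V ∧
      Nat.card V < 2 * (A.ncard + k) := by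
  let 𝒜 : Set (Set V) :=
    {A | (∀ u v, H.Adj u v → u ∈ A → v ∈ A) ∧ 2 * A.ncard ≤ Nat.card V}
  obtain ⟨A, ⟨hclosed, hhalf⟩, hmax⟩ := 𝒜.toFinite.exists_maximal ⟨∅, by simp [𝒜]⟩
  refine ⟨A, hclosed, hhalf, ?_⟩
  obtain ⟨v, hv⟩ : ∃ v, v ∉ A := by
    rw [← Set.ne_univ_iff_exists_notMem]
    rintro rfl
    rw [Set.ncard_univ] at hhalf
    have := Nat.card_pos (α := V)
    lia
  set B := {u | H.Reachable v u}
  have hunion_closed : ∀ u w, H.Adj u w → u ∈ A ∪ B → w ∈ A ∪ B := fun u w huw ↦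
    Or.imp (hclosed u w huw) fun hu ↦ SimpleGraph.Reachable.trans hu huw.reachable
  have hunion_large : Nat.card V < 2 * (A ∪ B).ncard := by
    by_contra! hle
    exact hv (hmax ⟨hunion_closed, hle⟩ Set.subset_union_left (Or.inr (.refl v)))
  have := Set.ncard_union_le A B
  have := hk v
  lia

theorem exists_cutEdges_closed_of_largestComp_lt {G : SimpleGraph V} {x : G.edgeSet → Bool} {a : ℝ}
    (h : (largestComp G x : ℝ) < a * Nat.card V) :
    ∃ A : Set V, 2 * A.ncard ≤ Nat.card V ∧ (1 / 2 - a) * Nat.card V < A.ncard ∧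
      ∀ e ∈ cutEdges G A, x e = false := by
  have : Nonempty V := by
    by_contra hV
    have := not_nonempty_iff.1 hV
    rw [Nat.card_of_isEmpty, Nat.cast_zero, mul_zero] at h
    exact h.not_ge (Nat.cast_nonneg _)
  have hcomp (v : V) : {u | (percoGraph G x).Reachable v u}.ncard ≤ largestComp G x :=
    le_csSup (Set.finite_range (compSize G x)).bddAbove ⟨v, rfl⟩
  obtain ⟨A, hclosed, hhalf, hlarge⟩ := exists_adj_closed_lt_two_mul_ncard_add _ hcomp
  refine ⟨A, hhalf, ?_, ?_⟩
  · have : (Nat.card V : ℝ) < 2 * (A.ncard + largestComp G x) := by exact_mod_cast hlarge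
    linarith
  · rintro ⟨_, he⟩ ⟨u, hu, v, hv, rfl⟩
    by_contra hx
    refine hv (hclosed u v ?_ hu)
    exact (SimpleGraph.fromEdgeSet_adj _).2 ⟨⟨he, by simpa using hx⟩, fun huv ↦ hv (huv ▸ hu)⟩

end Cuts

theorem eventually_exp_neg_mul_le_exp_neg_mul_div_log {C : ℝ} (hC : 0 ≤ C) :
    ∀ᶠ m : ℕ in atTop, Real.exp (-C * m) ≤ Real.exp (-C * m / Real.log m) := by
  filter_upwards [(Real.tendsto_log_atTop.comp tendsto_natCast_atTop_atTop).eventually_ge_atTop 1]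
    with m hm
  rw [neg_mul, neg_div]
  gcongr
  exact div_le_self (by positivity) hm

theorem two_pow_mul_exp_neg_add_log_two_mul (C : ℝ) (n : ℕ) :
    2 ^ n * Real.exp (-((C + Real.log 2) * n)) = Real.exp (-C * n) := by
  have htwo : (2 : ℝ) ^ n = Real.exp (n * Real.log 2) := by
    rw [Real.exp_nat_mul, Real.exp_log two_pos]
  rw [htwo, ← Real.exp_add]
  ring_nf

theorem stmt5_general {V : Type*} [Finite V] {G : SimpleGraph V} {a b C p : ℝ} (ha : a < 1 / 2)
    (hb : 0 < b) (hC : 0 ≤ C) (hG : CheegerGT G b)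
    (hp : 1 - Real.exp (-((C + Real.log 2) / (b * (1 / 2 - a)))) ≤ p) (hp1 : p ≤ 1) :
    1 - Real.exp (-C * Nat.card V) ≤
      probC p {x : G.edgeSet → Bool | a * Nat.card V ≤ (largestComp G x : ℝ)} := by
  classical
  have := Fintype.ofFinite V
  set κ := (C + Real.log 2) / (b * (1 / 2 - a))
  set c := Real.exp (-((C + Real.log 2) * Nat.card V))
  have : 0 < 1 / 2 - a := by linarith
  have hκ : 0 ≤ κ := by positivity
  have hp0 : 0 ≤ p := by linarith [Real.exp_le_one_iff.2 (neg_nonpos.2 hκ)]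
  let T : Finset (Set V) := {A | 2 * A.ncard ≤ Nat.card V ∧ (1 / 2 - a) * Nat.card V < A.ncard}
  have hT : (T.card : ℝ) ≤ 2 ^ Nat.card V := by
    rw [Nat.card_eq_fintype_card]
    exact_mod_cast Fintype.card_set (α := V) ▸ T.card_le_univ
  have hcut : ∀ A ∈ T, (1 - p) ^ (cutEdges G A).ncard ≤ c := by
    intro A hA
    obtain ⟨hhalf, hlarge⟩ := (Finset.mem_filter_univ A).1 hA
    have hpos : 0 < A.ncard := Nat.cast_pos.1 (lt_of_le_of_lt (by positivity) hlarge)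
    calc (1 - p) ^ (cutEdges G A).ncard ≤ Real.exp (-(κ * (b * A.ncard))) :=
          hG.pow_ncard_cutEdges_le (by linarith) hκ (by linarith) hpos hhalf
      _ ≤ Real.exp (-(κ * (b * ((1 / 2 - a) * Nat.card V)))) := by gcongr
      _ = c := by rw [← mul_assoc b, ← mul_assoc, div_mul_cancel₀ _ (by positivity)]
  calc 1 - Real.exp (-C * Nat.card V) ≤ 1 - T.card * c := by
        rw [← two_pow_mul_exp_neg_add_log_two_mul]
        gcongr
    _ ≤ _ := one_sub_card_mul_le_probC ⟨hp0, hp1⟩ T (cutEdges G) hcut fun x hx ↦ by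
        obtain ⟨A, hhalf, hlarge, hclosed⟩ :=
          exists_cutEdges_closed_of_largestComp_lt (not_le.1 hx)
        exact ⟨A, (Finset.mem_filter_univ A).2 ⟨hhalf, hlarge⟩, hclosed⟩

/-- there are constants `p₀(b) < 1`, `a(b) > 0` (depending only on `b`) and
`C(b,d) > 0` such that in any `(b,d)`-expander, for all `n` large enough and every
`p ≥ p₀`, `μ_{n,p}(L_n ≥ a |V_n|) ≥ 1 - exp(-C |V_n| / log |V_n|)`. -/
theorem stmt5 (b : ℝ) (hb : 0 < b) :
    ∃ p0 < (1 : ℝ), ∃ a > (0 : ℝ), ∀ d : ℕ, ∃ C > (0 : ℝ),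
      ∀ E : ExpanderSeq b d, ∃ N : ℕ, ∀ n ≥ N, ∀ p : ℝ, p0 ≤ p → p ≤ 1 →
        1 - Real.exp (-C * (Nat.card (E.V n) : ℝ) / Real.log (Nat.card (E.V n))) ≤
          probC p {x : (E.G n).edgeSet → Bool |
            a * (Nat.card (E.V n) : ℝ) ≤ (largestComp (E.G n) x : ℝ)} := by
  refine ⟨_, sub_lt_self 1 (Real.exp_pos (-((1 + Real.log 2) / (b * (1 / 2 - 1 / 4))))), 1 / 4,
    by norm_num, fun _ ↦ ⟨1, one_pos, fun E ↦ ?_⟩⟩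
  obtain ⟨N, hN⟩ := eventually_atTop.1 <|
    E.card_tendsto.eventually (eventually_exp_neg_mul_le_exp_neg_mul_div_log zero_le_one)
  have := E.finV
  exact ⟨N, fun n hn p hp hp1 ↦ (sub_le_sub_left (hN n hn) 1).trans
    (stmt5_general (by norm_num) hb zero_le_one (E.cheeger_gt n) hp hp1)⟩
end
end
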